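/- arXiv:2307.00349 — 2 statements merged into one kernel-verified Lean document; each statement's English description precedes it below -/
import Mathlib

section
/- Let (Ω, F, P) be a probability space with filtration (F_t)_{t≥0}, β ∈ (0,1), and let F: ℝ²_{>0} → ℝ_{>0} be a twice continuously differentiable neoclassical production function with F_{HX} > 0 satisfying liminf_{H→∞} σ_F(H,1) > σ for some σ > 1. Let (A_{Ht})_{t≥0} and (A_{Xt})_{t≥0} be adapted positive processes with E[ Σ_{t=1}^∞ (A_{Ht}/A_{Xt})^{1/σ−1} | F_0 ] < ∞ almost surely. Define w_t = F_H(A_{Ht},A_{Xt}) A_{Ht}, r_t = F_X(A_{Ht},A_{Xt}) A_{Xt}, P_t = β w_t, m_{t→t+s} = Π_{j=0}^{s−1} β w_{t+j}/(β w_{t+j+1} + r_{t+j+1}), and V_t = E[ Σ_{s=1}^∞ m_{t→t+s} r_{t+s} | F_t ]. Then V_t/P_t → 0 almost surely as t → ∞. -/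
/-!
Write `y = r / P` for the dividend yield. The stochastic discount factor telescopes, so that
`V_t / P_t` is a version of `E[T_t | F_t]` with `T_t = ∑_{s≥1} y_{t+s} / ∏_{j≤s} (1 + y_{t+j})`.
Here `T_t = 1 - ∏_{s≥1} (1 + y_{t+s})⁻¹` is at most `1`, decreasing in `t`, and bounded by the tail
`∑_{s≥1} y_{t+s}`. If the yields are summable, then `E[T_t | F_t]` is a nonnegative supermartingale
whose mean tends to zero, and hence it tends to zero almost surely.

Summability of the yields comes from the technology: as a function of `x = H / X`, the marginal rate
of substitution `F_X / F_H` has logarithmic derivative `1 / (x σ_F)`, so `σ ≤ σ_F` near infinity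
makes it `O(x ^ (1 / σ))`, and therefore `r / w = O(x ^ (1 / σ - 1))`.
-/

open MeasureTheory Filter Topology

noncomputable section

/-- Partial derivative of `F` with respect to its first argument (labor `H`). -/
def dH (F : ℝ → ℝ → ℝ) (H X : ℝ) : ℝ := deriv (fun h => F h X) H

/-- Partial derivative of `F` with respect to its second argument (land `X`). -/
def dX (F : ℝ → ℝ → ℝ) (H X : ℝ) : ℝ := deriv (fun x => F H x) X

/-- Second-order cross partial derivative of `F`. -/
def dHX (F : ℝ → ℝ → ℝ) (H X : ℝ) : ℝ := deriv (fun x => dH F H x) X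

/-- Elasticity of substitution `σ_F = F_H F_X / (F F_{HX})`. -/
def sigmaF (F : ℝ → ℝ → ℝ) (H X : ℝ) : ℝ :=
  dH F H X * dX F H X / (F H X * dHX F H X)

/-- A neoclassical production function: positive on the positive quadrant, homogeneous of
degree one, concave, continuously differentiable, with positive partial derivatives. -/
structure Neoclassical (F : ℝ → ℝ → ℝ) : Prop where
  pos : ∀ ⦃H X : ℝ⦄, 0 < H → 0 < X → 0 < F H X
  homog : ∀ ⦃l H X : ℝ⦄, 0 < l → 0 < H → 0 < X → F (l * H) (l * X) = l * F H X
  concave : ConcaveOn ℝ {p : ℝ × ℝ | 0 < p.1 ∧ 0 < p.2} (fun p => F p.1 p.2)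
  contDiff : ContDiffOn ℝ 1 (fun p : ℝ × ℝ => F p.1 p.2) {p : ℝ × ℝ | 0 < p.1 ∧ 0 < p.2}
  dH_pos : ∀ ⦃H X : ℝ⦄, 0 < H → 0 < X → 0 < dH F H X
  dX_pos : ∀ ⦃H X : ℝ⦄, 0 < H → 0 < X → 0 < dX F H X

/-- `g` is a version of the conditional expectation of the nonnegative extended-real-valued
function `f` given the sub-σ-algebra `m0`: it is `m0`-measurable and has the same integral
as `f` on every `m0`-measurable set. -/
def IsCondExp {Ω : Type*} (m0 : MeasurableSpace Ω) {m : MeasurableSpace Ω}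
    (μ : Measure Ω) (f g : Ω → ENNReal) : Prop :=
  Measurable[m0] g ∧ ∀ s : Set Ω, MeasurableSet[m0] s →
    ∫⁻ ω in s, f ω ∂μ = ∫⁻ ω in s, g ω ∂μ

open Asymptotics

section RealAnalysis

-- The liminf of a real function that is not bounded below is the junk value `0`.
lemma eventually_lt_of_nonneg_of_lt_liminf {α : Type*} {f : Filter α} {u : α → ℝ} {c : ℝ}
    (hc : 0 ≤ c) (h : c < f.liminf u) : ∀ᶠ x in f, c < u x := by
  rw [liminf_eq] at h
  have hne : {a | ∀ᶠ x in f, a ≤ u x}.Nonempty := by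
    by_contra hempty
    rw [Set.not_nonempty_iff_eq_empty.1 hempty, Real.sSup_empty] at h
    exact h.not_ge hc
  obtain ⟨a, ha, hca⟩ := exists_lt_of_lt_csSup hne h
  filter_upwards [ha] with x hx using hca.trans_le hx

lemma antitoneOn_mul_rpow_neg {k k' : ℝ → ℝ} {p a : ℝ} (ha : 0 < a)
    (hk : ∀ x ∈ Set.Ici a, HasDerivAt k (k' x) x)
    (hle : ∀ x ∈ Set.Ici a, x * k' x ≤ p * k x) :
    AntitoneOn (fun x => k x * x ^ (-p)) (Set.Ici a) := by
  have hderiv : ∀ x ∈ Set.Ici a, HasDerivAt (fun x => k x * x ^ (-p))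
      (x ^ (-p - 1) * (x * k' x - p * k x)) x := fun x hx => by
    have hx0 : 0 < x := ha.trans_le hx
    refine ((hk x hx).mul (Real.hasDerivAt_rpow_const (.inl hx0.ne'))).congr_deriv ?_
    rw [Real.rpow_sub_one hx0.ne']
    field_simp
    ring
  refine antitoneOn_of_hasDerivWithinAt_nonpos (convex_Ici a)
    (fun x hx => (hderiv x hx).continuousAt.continuousWithinAt)
    (fun x hx => (hderiv x (interior_subset hx)).hasDerivWithinAt) fun x hx => ?_
  have hx := interior_subset hx
  exact mul_nonpos_of_nonneg_of_nonpos (Real.rpow_nonneg (ha.trans_le hx).le _)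
    (sub_nonpos.2 (hle x hx))

lemma isBigO_rpow_of_mul_deriv_le {k k' : ℝ → ℝ} {p : ℝ}
    (hk : ∀ᶠ x in atTop, HasDerivAt k (k' x) x) (hk0 : ∀ᶠ x in atTop, 0 ≤ k x)
    (hle : ∀ᶠ x in atTop, x * k' x ≤ p * k x) :
    k =O[atTop] fun x => x ^ p := by
  obtain ⟨a, ha⟩ := eventually_atTop.1 (((eventually_gt_atTop 0).and hk0).and (hk.and hle))
  have hanti := antitoneOn_mul_rpow_neg (ha a le_rfl).1.1 (fun x hx => (ha x hx).2.1)
    (fun x hx => (ha x hx).2.2)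
  refine IsBigO.of_bound (k a * a ^ (-p)) ?_
  filter_upwards [eventually_ge_atTop a] with x hx
  obtain ⟨⟨hx0, hkx⟩, -⟩ := ha x hx
  have hxp : 0 < x ^ p := Real.rpow_pos_of_pos hx0 p
  rw [Real.norm_of_nonneg hkx, Real.norm_of_nonneg hxp.le, ← div_le_iff₀ hxp, div_eq_mul_inv,
    ← Real.rpow_neg hx0.le]
  exact hanti Set.self_mem_Ici hx hx

lemma tendsto_atTop_of_summable_rpow_neg {x : ℕ → ℝ} {p : ℝ} (hp : p < 0) (hx : ∀ t, 0 < x t)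
    (hsum : Summable fun t => x t ^ p) : Tendsto x atTop atTop := by
  have hpow : Tendsto (fun t => x t ^ p) atTop (𝓝[>] 0) :=
    tendsto_nhdsWithin_of_tendsto_nhds_of_eventually_within _ hsum.tendsto_atTop_zero
      (.of_forall fun t => Real.rpow_pos_of_pos (hx t) p)
  refine ((tendsto_rpow_neg_nhdsGT_zero (inv_lt_zero.2 hp)).comp hpow).congr fun t => ?_
  exact Real.rpow_rpow_inv (hx t).le hp.ne

lemma measurable_comp_of_continuousOn {Ω α β : Type*} {_ : MeasurableSpace Ω}
    [TopologicalSpace α] [MeasurableSpace α] [OpensMeasurableSpace α]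
    [TopologicalSpace β] [MeasurableSpace β] [BorelSpace β] {g : α → β} {s : Set α} {f : Ω → α}
    (hg : ContinuousOn g s) (hf : Measurable f) (hfs : ∀ ω, f ω ∈ s) :
    Measurable fun ω => g (f ω) :=
  hg.domRestrict.measurable.comp (hf.subtype_mk (h := hfs))

end RealAnalysis

/-- The open positive quadrant, the domain of a production function. -/
def posQuadrant : Set (ℝ × ℝ) := {p | 0 < p.1 ∧ 0 < p.2}

lemma isOpen_posQuadrant : IsOpen posQuadrant :=
  (isOpen_lt continuous_const continuous_fst).inter (isOpen_lt continuous_const continuous_snd)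

section PartialDerivatives

variable {F : ℝ → ℝ → ℝ} {H X : ℝ}

lemma hasDerivAt_dH (hF : DifferentiableAt ℝ (fun p : ℝ × ℝ => F p.1 p.2) (H, X)) :
    HasDerivAt (fun h => F h X) (dH F H X) H :=
  (hF.comp (f := fun h => (h, X)) H (by fun_prop)).hasDerivAt

lemma dH_eq_fderiv (hF : DifferentiableAt ℝ (fun p : ℝ × ℝ => F p.1 p.2) (H, X)) :
    dH F H X = fderiv ℝ (fun p : ℝ × ℝ => F p.1 p.2) (H, X) (1, 0) :=
  (hF.hasFDerivAt.comp_hasDerivAt (f := fun h => (h, X)) H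
    ((hasDerivAt_id H).prodMk (hasDerivAt_const H X))).deriv

lemma dX_eq_fderiv (hF : DifferentiableAt ℝ (fun p : ℝ × ℝ => F p.1 p.2) (H, X)) :
    dX F H X = fderiv ℝ (fun p : ℝ × ℝ => F p.1 p.2) (H, X) (0, 1) :=
  (hF.hasFDerivAt.comp_hasDerivAt (f := fun x => (H, x)) X
    ((hasDerivAt_const X H).prodMk (hasDerivAt_id X))).deriv

variable {m n : WithTop ℕ∞}

lemma differentiableAt_of_contDiffOn_posQuadrant
    (hF : ContDiffOn ℝ n (fun p : ℝ × ℝ => F p.1 p.2) posQuadrant) (hn : n ≠ 0)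
    (hH : 0 < H) (hX : 0 < X) : DifferentiableAt ℝ (fun p : ℝ × ℝ => F p.1 p.2) (H, X) :=
  (hF.contDiffAt (isOpen_posQuadrant.mem_nhds ⟨hH, hX⟩)).differentiableAt hn

lemma contDiffOn_dH (hF : ContDiffOn ℝ n (fun p : ℝ × ℝ => F p.1 p.2) posQuadrant)
    (hmn : m + 1 ≤ n) : ContDiffOn ℝ m (fun p : ℝ × ℝ => dH F p.1 p.2) posQuadrant :=
  ((hF.fderiv_of_isOpen isOpen_posQuadrant hmn).clm_apply contDiffOn_const).congr fun _ hp =>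
    dH_eq_fderiv <| differentiableAt_of_contDiffOn_posQuadrant hF (by rintro rfl; simp at hmn)
      hp.1 hp.2

lemma contDiffOn_dX (hF : ContDiffOn ℝ n (fun p : ℝ × ℝ => F p.1 p.2) posQuadrant)
    (hmn : m + 1 ≤ n) : ContDiffOn ℝ m (fun p : ℝ × ℝ => dX F p.1 p.2) posQuadrant :=
  ((hF.fderiv_of_isOpen isOpen_posQuadrant hmn).clm_apply contDiffOn_const).congr fun _ hp =>
    dX_eq_fderiv <| differentiableAt_of_contDiffOn_posQuadrant hF (by rintro rfl; simp at hmn)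
      hp.1 hp.2

end PartialDerivatives

lemma adapted_comp_of_continuousOn {Ω ι : Type*} [Preorder ι] {mΩ : MeasurableSpace Ω}
    {ℱ : Filtration ι mΩ} {G : ℝ → ℝ → ℝ}
    (hG : ContinuousOn (fun p : ℝ × ℝ => G p.1 p.2) posQuadrant) {A B : ι → Ω → ℝ}
    (hA : Adapted ℱ A) (hB : Adapted ℱ B) (hA0 : ∀ t ω, 0 < A t ω) (hB0 : ∀ t ω, 0 < B t ω) :
    Adapted ℱ fun t ω => G (A t ω) (B t ω) := fun t =>
  measurable_comp_of_continuousOn hG ((hA t).prodMk (hB t)) fun ω => ⟨hA0 t ω, hB0 t ω⟩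

/-- Positive homogeneity of degree `k` on the open positive quadrant. -/
def HomogeneousOfDegree (k : ℕ) (F : ℝ → ℝ → ℝ) : Prop :=
  ∀ ⦃l H X : ℝ⦄, 0 < l → 0 < H → 0 < X → F (l * H) (l * X) = l ^ k * F H X

/-- The marginal rate of technical substitution `F_X / F_H`. -/
def mrs (F : ℝ → ℝ → ℝ) (H X : ℝ) : ℝ := dX F H X / dH F H X

section Homogeneous

variable {F : ℝ → ℝ → ℝ} {H X : ℝ} {k : ℕ}

lemma Neoclassical.homogeneousOfDegree_one (hF : Neoclassical F) : HomogeneousOfDegree 1 F :=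
  fun l H X hl hH hX => by rw [pow_one, hF.homog hl hH hX]

namespace HomogeneousOfDegree

lemma eq_pow_mul (hF : HomogeneousOfDegree k F) (hH : 0 < H) (hX : 0 < X) :
    F H X = X ^ k * F (H / X) 1 := by
  rw [← hF hX (div_pos hH hX) one_pos, mul_div_cancel₀ H hX.ne', mul_one]

lemma partial_left (hF : HomogeneousOfDegree (k + 1) F) : HomogeneousOfDegree k (dH F) := by
  intro l H X hl hH hX
  have hscale : (fun h => F (l * h) (l * X)) =ᶠ[𝓝 H] fun h => l ^ (k + 1) * F h X := by
    filter_upwards [Ioi_mem_nhds hH] with h hh using hF hl hh hX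
  have hderiv := hscale.deriv_eq
  rw [deriv_comp_mul_left l (fun h => F h (l * X)), deriv_const_mul_field, smul_eq_mul] at hderiv
  exact mul_left_cancel₀ hl.ne' (by rw [dH, hderiv, dH]; ring)

lemma partial_right (hF : HomogeneousOfDegree (k + 1) F) : HomogeneousOfDegree k (dX F) := by
  intro l H X hl hH hX
  have hscale : (fun x => F (l * H) (l * x)) =ᶠ[𝓝 X] fun x => l ^ (k + 1) * F H x := by
    filter_upwards [Ioi_mem_nhds hX] with x hx using hF hl hH hx
  have hderiv := hscale.deriv_eq
  rw [deriv_comp_mul_left l (fun x => F (l * H) x), deriv_const_mul_field, smul_eq_mul] at hderiv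
  exact mul_left_cancel₀ hl.ne' (by rw [dX, hderiv, dX]; ring)

lemma mrs_eq (hF : HomogeneousOfDegree (k + 1) F) (hH : 0 < H) (hX : 0 < X) :
    mrs F H X = mrs F (H / X) 1 := by
  rw [mrs, mrs, hF.partial_right.eq_pow_mul hH hX, hF.partial_left.eq_pow_mul hH hX,
    mul_div_mul_left _ _ (pow_pos hX k).ne']

lemma euler (hF : HomogeneousOfDegree k F) (hH : 0 < H) (hX : 0 < X)
    (hd : DifferentiableAt ℝ (fun p : ℝ × ℝ => F p.1 p.2) (H, X)) :
    H * dH F H X + X * dX F H X = k * F H X := by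
  have hray : HasDerivAt (fun l : ℝ => (l * H, l * X)) (H, X) 1 := by
    simpa using ((hasDerivAt_id (1 : ℝ)).mul_const H).prodMk ((hasDerivAt_id (1 : ℝ)).mul_const X)
  have hchain := hd.hasFDerivAt.comp_hasDerivAt_of_eq 1 hray (by simp)
  have hpow : HasDerivAt (fun l : ℝ => F (l * H) (l * X)) (k * F H X) 1 := by
    have h := (hasDerivAt_pow k (1 : ℝ)).mul_const (F H X)
    rw [one_pow, mul_one] at h
    refine h.congr_of_eventuallyEq ?_
    filter_upwards [Ioi_mem_nhds one_pos] with l hl using hF hl hH hX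
  rw [← hchain.unique hpow, dH_eq_fderiv hd, dX_eq_fderiv hd, ← smul_eq_mul, ← smul_eq_mul,
    ← map_smul, ← map_smul, ← map_add]
  simp

variable (hF : HomogeneousOfDegree 1 F)
  (hF2 : ContDiffOn ℝ 2 (fun p : ℝ × ℝ => F p.1 p.2) posQuadrant)
include hF hF2

lemma hasDerivAt_dH_left (hH : 0 < H) (hX : 0 < X) :
    HasDerivAt (fun h => dH F h X) (-(X * dHX F H X) / H) H := by
  have hd := differentiableAt_of_contDiffOn_posQuadrant
    (contDiffOn_dH (m := 1) hF2 (by norm_num)) one_ne_zero hH hX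
  have heuler : H * dH (dH F) H X + X * dHX F H X = 0 := by
    have h := hF.partial_left.euler hH hX hd
    rwa [Nat.cast_zero, zero_mul] at h
  refine (hasDerivAt_dH hd).congr_deriv ?_
  rw [eq_div_iff hH.ne']
  linarith

lemma hasDerivAt_dX_left (hH : 0 < H) (hX : 0 < X) :
    HasDerivAt (fun h => dX F h X) (dHX F H X) H := by
  have hd : ∀ h, 0 < h → DifferentiableAt ℝ (fun p : ℝ × ℝ => F p.1 p.2) (h, X) := fun h hh =>
    differentiableAt_of_contDiffOn_posQuadrant hF2 two_ne_zero hh hX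
  have heuler : (fun h => dX F h X) =ᶠ[𝓝 H] fun h => (F h X - h * dH F h X) / X := by
    filter_upwards [Ioi_mem_nhds hH] with h hh
    have := hF.euler hh hX (hd h hh)
    rw [Nat.cast_one, one_mul] at this
    rw [eq_div_iff hX.ne']
    linarith
  refine ((((hasDerivAt_dH (hd H hH)).sub ((hasDerivAt_id H).mul
    (hF.hasDerivAt_dH_left hF2 hH hX))).div_const X).congr_of_eventuallyEq heuler).congr_deriv ?_
  simp only [id_eq]
  field_simp
  ring

-- The classical description of `σ_F`: `1 / σ_F` is the elasticity of the MRS in `H`.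
lemma hasDerivAt_mrs (hH : 0 < H) (hX : 0 < X) (hσ : sigmaF F H X ≠ 0) :
    HasDerivAt (fun h => mrs F h X) (mrs F H X / (H * sigmaF F H X)) H := by
  obtain ⟨hdH, hdX⟩ := mul_ne_zero_iff.1 (div_ne_zero_iff.1 hσ).1
  refine ((hF.hasDerivAt_dX_left hF2 hH hX).div (hF.hasDerivAt_dH_left hF2 hH hX)
    hdH).congr_deriv ?_
  have heuler := hF.euler hH hX (differentiableAt_of_contDiffOn_posQuadrant hF2 two_ne_zero hH hX)
  rw [Nat.cast_one, one_mul] at heuler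
  rw [mrs, sigmaF]
  field_simp
  rw [← heuler]
  ring

lemma isBigO_mrs (hdH : ∀ ⦃H : ℝ⦄, 0 < H → 0 ≤ dH F H 1)
    (hdX : ∀ ⦃H : ℝ⦄, 0 < H → 0 ≤ dX F H 1) {σ : ℝ} (hσ : 0 < σ)
    (hσF : ∀ᶠ x in atTop, σ ≤ sigmaF F x 1) :
    (fun x => mrs F x 1) =O[atTop] fun x => x ^ (1 / σ) := by
  have hmrs : ∀ x, 0 < x → 0 ≤ mrs F x 1 := fun x hx => div_nonneg (hdX hx) (hdH hx)
  refine isBigO_rpow_of_mul_deriv_le (k' := fun x => mrs F x 1 / (x * sigmaF F x 1)) ?_ ?_ ?_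
  · filter_upwards [hσF, eventually_gt_atTop 0] with x hσx hx
    exact hF.hasDerivAt_mrs hF2 hx one_pos (hσ.trans_le hσx).ne'
  · filter_upwards [eventually_gt_atTop 0] with x hx using hmrs x hx
  · filter_upwards [hσF, eventually_gt_atTop 0] with x hσx hx
    calc x * (mrs F x 1 / (x * sigmaF F x 1)) = 1 / sigmaF F x 1 * mrs F x 1 := by field_simp
      _ ≤ 1 / σ * mrs F x 1 := by gcongr; exact hmrs x hx

lemma summable_incomeRatio (hdH : ∀ ⦃H : ℝ⦄, 0 < H → 0 ≤ dH F H 1)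
    (hdX : ∀ ⦃H : ℝ⦄, 0 < H → 0 ≤ dX F H 1) {σ : ℝ} (hσ : 1 < σ)
    (hσF : ∀ᶠ x in atTop, σ ≤ sigmaF F x 1) {a b : ℕ → ℝ} (ha : ∀ t, 0 < a t) (hb : ∀ t, 0 < b t)
    (hsum : Summable fun t => (a t / b t) ^ (1 / σ - 1)) :
    Summable fun t => dX F (a t) (b t) * b t / (dH F (a t) (b t) * a t) := by
  have hx : ∀ t, 0 < a t / b t := fun t => div_pos (ha t) (hb t)
  have hexp : 1 / σ - 1 < 0 := sub_neg.2 ((div_lt_one (one_pos.trans hσ)).2 hσ)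
  have hbigO : (fun x => mrs F x 1 * x⁻¹) =O[atTop] fun x => x ^ (1 / σ - 1) := by
    refine ((hF.isBigO_mrs hF2 hdH hdX (one_pos.trans hσ) hσF).mul
      (isBigO_refl (·⁻¹) atTop)).congr' .rfl ?_
    filter_upwards [eventually_gt_atTop 0] with x hx
    exact ((Real.rpow_sub_one hx.ne' _).trans (div_eq_mul_inv _ _)).symm
  have hratio : ∀ t, mrs F (a t / b t) 1 * (a t / b t)⁻¹ =
      dX F (a t) (b t) * b t / (dH F (a t) (b t) * a t) := fun t => by
    rw [← hF.mrs_eq (ha t) (hb t), mrs, inv_div, div_mul_div_comm]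
  exact (summable_of_isBigO_nat hsum (hbigO.comp_tendsto
    (tendsto_atTop_of_summable_rpow_neg hexp hx hsum))).congr hratio

end HomogeneousOfDegree

end Homogeneous

/-- The yield of date `s` discounted by the gross yields `1 + y j` of the dates up to `s`. -/
def discountedYield (y : ℕ → ℝ) (s : ℕ) : ℝ := y s / ∏ j ∈ Finset.range (s + 1), (1 + y j)

/-- The total discounted yield. If `y s` is the dividend-price ratio at date `s + 1`, this is the
ratio of the present value of all dividends to the price at date `0`. -/
def totalDiscountedYield (y : ℕ → ℝ) : ENNReal := ∑' s, ENNReal.ofReal (discountedYield y s)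

/-- The present value at date `0` of the dividends `r 1, r 2, …` of an asset with prices `P`, when
payoffs are discounted by the asset's own gross returns `(P (j + 1) + r (j + 1)) / P j`. -/
def presentValue (P r : ℕ → ℝ) : ENNReal :=
  ∑' s, ENNReal.ofReal
    ((∏ j ∈ Finset.range (s + 1), P j / (P (j + 1) + r (j + 1))) * r (s + 1))

section Discounting

variable {y : ℕ → ℝ}

lemma one_le_prod_range_one_add (hy : ∀ s, 0 ≤ y s) (n : ℕ) :
    1 ≤ ∏ j ∈ Finset.range n, (1 + y j) :=
  Finset.one_le_prod fun j _ => le_add_of_nonneg_right (hy j)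

lemma discountedYield_nonneg (hy : ∀ s, 0 ≤ y s) (s : ℕ) : 0 ≤ discountedYield y s :=
  div_nonneg (hy s) (zero_le_one.trans (one_le_prod_range_one_add hy _))

lemma sum_range_discountedYield (hy : ∀ s, 0 ≤ y s) (n : ℕ) :
    ∑ s ∈ Finset.range n, discountedYield y s = 1 - (∏ j ∈ Finset.range n, (1 + y j))⁻¹ := by
  induction n with
  | zero => simp
  | succ n ih =>
    have hprod := (zero_lt_one.trans_le (one_le_prod_range_one_add hy n)).ne'
    have hgross : 1 + y n ≠ 0 := by linarith [hy n]
    rw [Finset.sum_range_succ, ih, discountedYield, Finset.prod_range_succ]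
    field_simp
    ring

lemma totalDiscountedYield_eq_iSup (hy : ∀ s, 0 ≤ y s) :
    totalDiscountedYield y =
      ⨆ n, ENNReal.ofReal (1 - (∏ j ∈ Finset.range n, (1 + y j))⁻¹) := by
  simp only [totalDiscountedYield, ENNReal.tsum_eq_iSup_nat, ← sum_range_discountedYield hy,
    ENNReal.ofReal_sum_of_nonneg fun s _ => discountedYield_nonneg hy s]

lemma totalDiscountedYield_le_one (hy : ∀ s, 0 ≤ y s) : totalDiscountedYield y ≤ 1 := by
  rw [totalDiscountedYield_eq_iSup hy]
  refine iSup_le fun n => ENNReal.ofReal_le_one.2 (sub_le_self 1 (inv_nonneg.2 ?_))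
  exact zero_le_one.trans (one_le_prod_range_one_add hy n)

lemma totalDiscountedYield_succ_le (hy : ∀ s, 0 ≤ y s) :
    totalDiscountedYield (fun s => y (s + 1)) ≤ totalDiscountedYield y := by
  rw [totalDiscountedYield_eq_iSup hy, totalDiscountedYield_eq_iSup fun s => hy (s + 1)]
  refine iSup_le fun n => le_iSup_of_le (n + 1) (ENNReal.ofReal_le_ofReal ?_)
  have hprod := one_le_prod_range_one_add (fun s => hy (s + 1)) n
  rw [Finset.prod_range_succ']
  gcongr
  exact le_mul_of_one_le_right (zero_le_one.trans hprod) (le_add_of_nonneg_right (hy 0))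

lemma totalDiscountedYield_le_tsum (hy : ∀ s, 0 ≤ y s) :
    totalDiscountedYield y ≤ ∑' s, ENNReal.ofReal (y s) :=
  ENNReal.tsum_le_tsum fun s => ENNReal.ofReal_le_ofReal <|
    div_le_self (hy s) (one_le_prod_range_one_add hy _)

lemma antitone_totalDiscountedYield_shift (hy : ∀ s, 0 ≤ y s) :
    Antitone fun t => totalDiscountedYield fun s => y (t + s) :=
  antitone_nat_of_succ_le fun t => by
    simpa only [Nat.add_right_comm t 1, Nat.add_assoc] using
      totalDiscountedYield_succ_le fun s => hy (t + s)

lemma tendsto_totalDiscountedYield_shift (hy : ∀ s, 0 ≤ y s) (hsum : Summable y) :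
    Tendsto (fun t => totalDiscountedYield fun s => y (t + s)) atTop (𝓝 0) := by
  refine tendsto_of_tendsto_of_tendsto_of_le_of_le tendsto_const_nhds
    (ENNReal.tendsto_sum_nat_add _ hsum.tsum_ofReal_ne_top) (fun _ => zero_le) fun t => ?_
  simpa only [add_comm t] using totalDiscountedYield_le_tsum fun s => hy (t + s)

lemma measurable_totalDiscountedYield {Ω : Type*} [MeasurableSpace Ω] {y : Ω → ℕ → ℝ}
    (hy : ∀ s, Measurable fun ω => y ω s) : Measurable fun ω => totalDiscountedYield (y ω) :=
  .tsum fun s => ((hy s).div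
    (Finset.measurable_fun_prod _ fun j _ => (hy j).const_add 1)).ennreal_ofReal

lemma prod_range_price_div_payoff {P r : ℕ → ℝ} (hP : ∀ t, 0 < P t) (hr : ∀ t, 0 ≤ r t) (n : ℕ) :
    ∏ j ∈ Finset.range n, P j / (P (j + 1) + r (j + 1)) =
      P 0 / (P n * ∏ j ∈ Finset.range n, (1 + r (j + 1) / P (j + 1))) := by
  induction n with
  | zero => simp [(hP 0).ne']
  | succ n ih =>
    have hPn := hP n
    have hPn' := hP (n + 1)
    have hpayoff : 0 < P (n + 1) + r (n + 1) := add_pos_of_pos_of_nonneg hPn' (hr (n + 1))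
    have hgross : 1 + r (n + 1) / P (n + 1) = (P (n + 1) + r (n + 1)) / P (n + 1) := by field_simp
    have hprod := zero_lt_one.trans_le
      (one_le_prod_range_one_add (fun j => div_nonneg (hr (j + 1)) (hP (j + 1)).le) n)
    rw [Finset.prod_range_succ, Finset.prod_range_succ, ih, hgross]
    field_simp

lemma presentValue_eq {P r : ℕ → ℝ} (hP : ∀ t, 0 < P t) (hr : ∀ t, 0 ≤ r t) :
    presentValue P r =
      totalDiscountedYield (fun s => r (s + 1) / P (s + 1)) * ENNReal.ofReal (P 0) := by
  have hy : ∀ s, 0 ≤ r (s + 1) / P (s + 1) := fun s => div_nonneg (hr _) (hP _).le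
  rw [totalDiscountedYield, ← ENNReal.tsum_mul_right]
  refine tsum_congr fun s => ?_
  rw [← ENNReal.ofReal_mul (discountedYield_nonneg hy s), prod_range_price_div_payoff hP hr,
    discountedYield]
  congr 1
  have hPs := hP (s + 1)
  have hprod := zero_lt_one.trans_le (one_le_prod_range_one_add hy (s + 1))
  field_simp

end Discounting

section ConditionalExpectation

variable {Ω : Type*} {m0 m : MeasurableSpace Ω} {μ : Measure Ω} {f g h : Ω → ENNReal}

namespace IsCondExp

lemma lintegral_eq (hfg : IsCondExp m0 μ f g) : ∫⁻ ω, f ω ∂μ = ∫⁻ ω, g ω ∂μ := by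
  simpa using hfg.2 Set.univ MeasurableSet.univ

lemma restrict (hfg : IsCondExp m0 μ f g) (hm : m0 ≤ m) {s : Set Ω} (hs : MeasurableSet[m0] s) :
    IsCondExp m0 (μ.restrict s) f g :=
  ⟨hfg.1, fun t ht => by
    rw [Measure.restrict_restrict (hm t ht)]; exact hfg.2 _ (ht.inter hs)⟩

lemma lintegral_mul (hfg : IsCondExp m0 μ f g) (hm : m0 ≤ m) (hf : AEMeasurable f μ)
    (hh : Measurable[m0] h) : ∫⁻ ω, f ω * h ω ∂μ = ∫⁻ ω, g ω * h ω ∂μ := by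
  have htrim : (μ.withDensity f).trim hm = (μ.withDensity g).trim hm := by
    refine @Measure.ext _ m0 _ _ fun s hs => ?_
    rw [trim_measurableSet_eq hm hs, trim_measurableSet_eq hm hs, withDensity_apply _ (hm s hs),
      withDensity_apply _ (hm s hs), hfg.2 s hs]
  have hhm : AEMeasurable h μ := (hh.mono hm le_rfl).aemeasurable
  calc ∫⁻ ω, f ω * h ω ∂μ = ∫⁻ ω, h ω ∂(μ.withDensity f).trim hm := by
        rw [lintegral_trim hm hh, lintegral_withDensity_eq_lintegral_mul₀ hf hhm]; rfl
    _ = ∫⁻ ω, h ω ∂(μ.withDensity g).trim hm := by rw [htrim]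
    _ = ∫⁻ ω, g ω * h ω ∂μ := by
        rw [lintegral_trim hm hh, lintegral_withDensity_eq_lintegral_mul₀
          (hfg.1.mono hm le_rfl).aemeasurable hhm]; rfl

lemma mul_right (hfg : IsCondExp m0 μ f g) (hm : m0 ≤ m) (hf : AEMeasurable f μ)
    (hh : Measurable[m0] h) : IsCondExp m0 μ (fun ω => f ω * h ω) fun ω => g ω * h ω :=
  ⟨hfg.1.mul hh, fun _ hs => (hfg.restrict hm hs).lintegral_mul hm hf.restrict hh⟩

lemma ae_lt_top [IsFiniteMeasure μ] (hfg : IsCondExp m0 μ f g) (hm : m0 ≤ m)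
    (hf : AEMeasurable f μ) (hg : ∀ᵐ ω ∂μ, g ω < ⊤) : ∀ᵐ ω ∂μ, f ω < ⊤ := by
  have hlevel : ∀ n : ℕ, ∀ᵐ ω ∂μ, g ω ≤ n → f ω < ⊤ := fun n => by
    have hs : MeasurableSet[m0] {ω | g ω ≤ n} := hfg.1 measurableSet_Iic
    refine (ae_restrict_iff' (hm _ hs)).1 (ae_lt_top' hf.restrict ?_)
    rw [hfg.2 _ hs]
    exact (setLIntegral_lt_top_of_le_nnreal (measure_ne_top _ _) ⟨n, fun ω hω => hω⟩).ne
  filter_upwards [ae_all_iff.2 hlevel, hg] with ω hω hgω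
  obtain ⟨n, hn⟩ := ENNReal.exists_nat_gt hgω.ne
  exact hω n hn.le

lemma ae_summable [IsFiniteMeasure μ] {u : ℕ → Ω → ℝ}
    (hug : IsCondExp m0 μ (fun ω => ∑' t, ENNReal.ofReal (u t ω)) g) (hm : m0 ≤ m)
    (hu : ∀ t, Measurable (u t)) (hu0 : ∀ t ω, 0 ≤ u t ω) (hg : ∀ᵐ ω ∂μ, g ω < ⊤) :
    ∀ᵐ ω ∂μ, Summable fun t => u t ω := by
  have hmeas : Measurable fun ω => ∑' t, ENNReal.ofReal (u t ω) :=
    .tsum fun t => (hu t).ennreal_ofReal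
  filter_upwards [hug.ae_lt_top hm hmeas.aemeasurable hg] with ω hω
  exact (ENNReal.summable_toReal hω.ne).congr fun t => ENNReal.toReal_ofReal (hu0 t ω)

end IsCondExp

end ConditionalExpectation

section Convergence

variable {Ω : Type*} {mΩ : MeasurableSpace Ω} {μ : Measure Ω}

lemma ae_tendsto_zero_of_tendsto_lintegral {W : ℕ → Ω → ENNReal} (hW : ∀ t, Measurable (W t))
    (hint : Tendsto (fun t => ∫⁻ ω, W t ω ∂μ) atTop (𝓝 0))
    (hlim : ∀ᵐ ω ∂μ, ∃ c, Tendsto (fun t => W t ω) atTop (𝓝 c)) :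
    ∀ᵐ ω ∂μ, Tendsto (fun t => W t ω) atTop (𝓝 0) := by
  have hfatou : ∫⁻ ω, liminf (fun t => W t ω) atTop ∂μ = 0 :=
    le_antisymm ((lintegral_liminf_le hW).trans hint.liminf_eq.le) zero_le
  rw [lintegral_eq_zero_iff (.liminf hW)] at hfatou
  filter_upwards [hfatou, hlim] with ω hω ⟨c, hc⟩
  have hc0 : c = 0 := hc.liminf_eq.symm.trans hω
  rwa [hc0] at hc

variable [IsFiniteMeasure μ] {ℱ : Filtration ℕ mΩ}

-- Doob's convergence theorem for nonnegative supermartingales.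
lemma ae_exists_tendsto_of_setLIntegral_succ_le {W : ℕ → Ω → ENNReal} (hW : Adapted ℱ W)
    (hW0 : ∫⁻ ω, W 0 ω ∂μ ≠ ⊤)
    (hle : ∀ t s, MeasurableSet[ℱ t] s → ∫⁻ ω in s, W (t + 1) ω ∂μ ≤ ∫⁻ ω in s, W t ω ∂μ) :
    ∀ᵐ ω ∂μ, ∃ c, Tendsto (fun t => W t ω) atTop (𝓝 c) := by
  have hWm : ∀ t, Measurable (W t) := fun t => (hW t).mono (ℱ.le t) le_rfl
  have hmean : ∀ t, ∫⁻ ω, W t ω ∂μ ≤ ∫⁻ ω, W 0 ω ∂μ := fun t =>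
    antitone_nat_of_succ_le (f := fun t => ∫⁻ ω, W t ω ∂μ)
      (fun t => by simpa using hle t Set.univ MeasurableSet.univ) t.zero_le
  have hfin : ∀ t, ∫⁻ ω, W t ω ∂μ ≠ ⊤ := fun t => ne_top_of_le_ne_top hW0 (hmean t)
  have hWtop : ∀ t, ∀ᵐ ω ∂μ, W t ω < ⊤ := fun t => ae_lt_top (hWm t) (hfin t)
  have hsuper : Supermartingale (fun t ω => (W t ω).toReal) ℱ μ := by
    refine supermartingale_of_setIntegral_succ_le
      (fun t => (hW t).ennreal_toReal.stronglyMeasurable)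
      (fun t => integrable_toReal_of_lintegral_ne_top (hWm t).aemeasurable (hfin t))
      fun t s hs => ?_
    rw [integral_toReal (hWm _).aemeasurable (ae_restrict_of_ae (hWtop _)),
      integral_toReal (hWm _).aemeasurable (ae_restrict_of_ae (hWtop _))]
    exact ENNReal.toReal_mono
      (ne_top_of_le_ne_top (hfin t) (setLIntegral_le_lintegral _ _)) (hle t s hs)
  have hbdd : ∀ t, eLpNorm ((-fun t ω => (W t ω).toReal : ℕ → Ω → ℝ) t) 1 μ ≤
      (∫⁻ ω, W 0 ω ∂μ).toNNReal := fun t => by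
    rw [Pi.neg_apply, eLpNorm_neg, eLpNorm_one_eq_lintegral_enorm, ENNReal.coe_toNNReal hW0]
    refine (lintegral_mono fun ω => ?_).trans (hmean t)
    rw [Real.enorm_of_nonneg ENNReal.toReal_nonneg]
    exact ENNReal.ofReal_toReal_le
  filter_upwards [hsuper.neg.exists_ae_tendsto_of_bdd hbdd, ae_all_iff.2 hWtop] with ω ⟨c, hc⟩ hω
  refine ⟨ENNReal.ofReal (-c), (ENNReal.tendsto_ofReal hc.neg).congr fun t => ?_⟩
  simp only [Pi.neg_apply, neg_neg, ENNReal.ofReal_toReal (hω t).ne]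

lemma ae_tendsto_condExp_zero_of_antitone {T W : ℕ → Ω → ENNReal} (hT : ∀ t, Measurable (T t))
    (hTW : ∀ t, IsCondExp (ℱ t) μ (T t) (W t)) (hT0 : ∫⁻ ω, T 0 ω ∂μ ≠ ⊤)
    (hanti : ∀ᵐ ω ∂μ, Antitone fun t => T t ω)
    (hlim : ∀ᵐ ω ∂μ, Tendsto (fun t => T t ω) atTop (𝓝 0)) :
    ∀ᵐ ω ∂μ, Tendsto (fun t => W t ω) atTop (𝓝 0) := by
  refine ae_tendsto_zero_of_tendsto_lintegral (fun t => (hTW t).1.mono (ℱ.le t) le_rfl) ?_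
    (ae_exists_tendsto_of_setLIntegral_succ_le (fun t => (hTW t).1) ?_ fun t s hs => ?_)
  · simp only [← (hTW _).lintegral_eq]
    simpa using tendsto_lintegral_of_dominated_convergence (T 0) hT
      (fun t => hanti.mono fun ω hω => hω t.zero_le) hT0 hlim
  · rwa [← (hTW 0).lintegral_eq]
  · rw [← (hTW t).2 s hs, ← (hTW (t + 1)).2 s (ℱ.mono t.le_succ s hs)]
    exact lintegral_mono_ae (ae_restrict_of_ae (hanti.mono fun ω hω => hω t.le_succ))

lemma ae_tendsto_condExp_presentValue_div_price {P r : ℕ → Ω → ℝ} (hP : Adapted ℱ P)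
    (hr : ∀ t, Measurable (r t)) (hP0 : ∀ t ω, 0 < P t ω) (hr0 : ∀ t ω, 0 ≤ r t ω)
    (hsum : ∀ᵐ ω ∂μ, Summable fun t => r (t + 1) ω / P (t + 1) ω) {V : ℕ → Ω → ENNReal}
    (hV : ∀ t, IsCondExp (ℱ t) μ
      (fun ω => presentValue (fun j => P (t + j) ω) fun j => r (t + j) ω) (V t)) :
    ∀ᵐ ω ∂μ, Tendsto (fun t => V t ω / ENNReal.ofReal (P t ω)) atTop (𝓝 0) := by
  have hPm : ∀ t, Measurable (P t) := fun t => (hP t).mono (ℱ.le t) le_rfl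
  set y : Ω → ℕ → ℝ := fun ω s => r (s + 1) ω / P (s + 1) ω
  have hy : ∀ ω s, 0 ≤ y ω s := fun ω s => div_nonneg (hr0 _ ω) (hP0 _ ω).le
  have hT : ∀ t, Measurable fun ω => totalDiscountedYield fun s => y ω (t + s) := fun t =>
    measurable_totalDiscountedYield fun s => (hr _).div (hPm _)
  refine ae_tendsto_condExp_zero_of_antitone (ℱ := ℱ) hT (fun t => ?_) ?_
    (.of_forall fun ω => antitone_totalDiscountedYield_shift (hy ω))
    (hsum.mono fun ω hω => tendsto_totalDiscountedYield_shift (hy ω) hω)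
  · have hpv : ∀ ω, presentValue (fun j => P (t + j) ω) (fun j => r (t + j) ω) =
        totalDiscountedYield (fun s => y ω (t + s)) * ENNReal.ofReal (P t ω) := fun ω =>
      presentValue_eq (fun j => hP0 (t + j) ω) fun j => hr0 (t + j) ω
    have hVt := hV t
    simp only [hpv] at hVt
    have hdiv := hVt.mul_right (ℱ.le t) ((hT t).mul (hPm t).ennreal_ofReal).aemeasurable
      (hP t).ennreal_ofReal.inv
    simpa only [Pi.inv_apply, div_eq_mul_inv (V t _), ENNReal.mul_inv_cancel_right
      (ENNReal.ofReal_pos.2 (hP0 t _)).ne' ENNReal.ofReal_ne_top] using hdiv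
  · exact ((lintegral_mono fun ω => totalDiscountedYield_le_one fun s => hy ω (0 + s)).trans_lt
      (by simp [measure_lt_top])).ne

end Convergence

theorem fundamental_value_price_ratio_tendsto_zero_general
    {Ω : Type*} {mΩ : MeasurableSpace Ω} {μ : Measure Ω} [IsFiniteMeasure μ] {ℱ : Filtration ℕ mΩ}
    {β : ℝ} (hβ : 0 < β) {F : ℝ → ℝ → ℝ} (hF : HomogeneousOfDegree 1 F)
    (hF2 : ContDiffOn ℝ 2 (fun p : ℝ × ℝ => F p.1 p.2) posQuadrant)
    (hdH : ∀ ⦃H X : ℝ⦄, 0 < H → 0 < X → 0 < dH F H X)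
    (hdX : ∀ ⦃H X : ℝ⦄, 0 < H → 0 < X → 0 ≤ dX F H X)
    {σ : ℝ} (hσ : 1 < σ) (hσF : ∀ᶠ H in atTop, σ ≤ sigmaF F H 1)
    {AH AX : ℕ → Ω → ℝ} (hAH : Adapted ℱ AH) (hAX : Adapted ℱ AX)
    (hAH0 : ∀ t ω, 0 < AH t ω) (hAX0 : ∀ t ω, 0 < AX t ω)
    (hsum : ∃ g : Ω → ENNReal,
      IsCondExp (ℱ 0) μ
        (fun ω => ∑' t : ℕ, ENNReal.ofReal ((AH (t + 1) ω / AX (t + 1) ω) ^ (1 / σ - 1))) g ∧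
      ∀ᵐ ω ∂μ, g ω < ⊤)
    {w r P : ℕ → Ω → ℝ} {m : ℕ → ℕ → Ω → ℝ}
    (hw : ∀ t ω, w t ω = dH F (AH t ω) (AX t ω) * AH t ω)
    (hr : ∀ t ω, r t ω = dX F (AH t ω) (AX t ω) * AX t ω)
    (hP : ∀ t ω, P t ω = β * w t ω)
    (hm : ∀ t s ω, m t s ω =
      ∏ j ∈ Finset.range s, β * w (t + j) ω / (β * w (t + j + 1) ω + r (t + j + 1) ω))
    {V : ℕ → Ω → ENNReal}
    (hV : ∀ t, IsCondExp (ℱ t) μ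
      (fun ω => ∑' s : ℕ, ENNReal.ofReal (m t (s + 1) ω * r (t + s + 1) ω)) (V t)) :
    ∀ᵐ ω ∂μ, Tendsto (fun t => V t ω / ENNReal.ofReal (P t ω)) atTop (𝓝 0) := by
  have hwm : Adapted ℱ w := fun t => funext (hw t) ▸
    ((adapted_comp_of_continuousOn (contDiffOn_dH (m := 1) hF2 (by norm_num)).continuousOn
      hAH hAX hAH0 hAX0) t).mul (hAH t)
  have hrm : Adapted ℱ r := fun t => funext (hr t) ▸
    ((adapted_comp_of_continuousOn (contDiffOn_dX (m := 1) hF2 (by norm_num)).continuousOn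
      hAH hAX hAH0 hAX0) t).mul (hAX t)
  have hyield : ∀ᵐ ω ∂μ, Summable fun t => r (t + 1) ω / P (t + 1) ω := by
    obtain ⟨g, hg, hgtop⟩ := hsum
    have hAHm : ∀ t, Measurable (AH t) := fun t => (hAH t).mono (ℱ.le t) le_rfl
    have hAXm : ∀ t, Measurable (AX t) := fun t => (hAX t).mono (ℱ.le t) le_rfl
    have hx : ∀ t, Measurable fun ω => (AH (t + 1) ω / AX (t + 1) ω) ^ (1 / σ - 1) := fun t =>
      ((hAHm (t + 1)).div (hAXm (t + 1))).pow_const _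
    filter_upwards [hg.ae_summable (ℱ.le 0) hx
      (fun t ω => Real.rpow_nonneg (div_pos (hAH0 _ ω) (hAX0 _ ω)).le _) hgtop] with ω hω
    refine ((hF.summable_incomeRatio hF2 (fun H hH => (hdH hH one_pos).le)
      (fun H hH => hdX hH one_pos) hσ hσF (fun t => hAH0 (t + 1) ω) (fun t => hAX0 (t + 1) ω)
      hω).div_const β).congr fun t => ?_
    rw [hP, hw, hr, div_div, mul_comm β]
  simp only [hm, ← hP] at hV
  refine ae_tendsto_condExp_presentValue_div_price (fun t => funext (hP t) ▸ (hwm t).const_mul β)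
    (fun t => (hrm t).mono (ℱ.le t) le_rfl) (fun t ω => ?_) (fun t ω => ?_) hyield hV
  · rw [hP, hw]
    exact mul_pos hβ (mul_pos (hdH (hAH0 t ω) (hAX0 t ω)) (hAH0 t ω))
  · rw [hr]
    exact mul_nonneg (hdX (hAH0 t ω) (hAX0 t ω)) (hAX0 t ω).le

/-- Under unbalanced growth (the summability condition) and elasticity of substitution
exceeding `σ > 1` at high input levels, the ratio of the fundamental value of land
`V_t = E[∑_{s≥1} m_{t→t+s} r_{t+s} | F_t]` to the equilibrium land price `P_t = β w_t`
converges to zero almost surely. -/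
theorem fundamental_value_price_ratio_tendsto_zero
    {Ω : Type*} {mΩ : MeasurableSpace Ω} (μ : Measure Ω) [IsProbabilityMeasure μ]
    (ℱ : Filtration ℕ mΩ)
    (β : ℝ) (hβ : β ∈ Set.Ioo (0 : ℝ) 1)
    (F : ℝ → ℝ → ℝ) (hF : Neoclassical F)
    (hF2 : ContDiffOn ℝ 2 (fun p : ℝ × ℝ => F p.1 p.2) {p : ℝ × ℝ | 0 < p.1 ∧ 0 < p.2})
    (hFHX : ∀ ⦃H X : ℝ⦄, 0 < H → 0 < X → 0 < dHX F H X)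
    (σ : ℝ) (hσ : 1 < σ)
    (hliminf : σ < atTop.liminf (fun H : ℝ => sigmaF F H 1))
    (AH AX : ℕ → Ω → ℝ)
    (hAH_adapted : Adapted ℱ AH) (hAX_adapted : Adapted ℱ AX)
    (hAH_pos : ∀ t ω, 0 < AH t ω) (hAX_pos : ∀ t ω, 0 < AX t ω)
    (hsum : ∃ g : Ω → ENNReal,
      IsCondExp (ℱ 0) μ
        (fun ω => ∑' t : ℕ, ENNReal.ofReal ((AH (t + 1) ω / AX (t + 1) ω) ^ (1 / σ - 1))) g ∧
      ∀ᵐ ω ∂μ, g ω < ⊤)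
    (w r P : ℕ → Ω → ℝ) (m : ℕ → ℕ → Ω → ℝ)
    (hw : ∀ t ω, w t ω = dH F (AH t ω) (AX t ω) * AH t ω)
    (hr : ∀ t ω, r t ω = dX F (AH t ω) (AX t ω) * AX t ω)
    (hP : ∀ t ω, P t ω = β * w t ω)
    (hm : ∀ t s ω, m t s ω =
      ∏ j ∈ Finset.range s, β * w (t + j) ω / (β * w (t + j + 1) ω + r (t + j + 1) ω)) :
    ∀ V : ℕ → Ω → ENNReal,
      (∀ t, IsCondExp (ℱ t) μ
        (fun ω => ∑' s : ℕ, ENNReal.ofReal (m t (s + 1) ω * r (t + s + 1) ω)) (V t)) →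
      ∀ᵐ ω ∂μ, Tendsto (fun t => V t ω / ENNReal.ofReal (P t ω)) atTop (𝓝 0) :=
  fun _ hV => fundamental_value_price_ratio_tendsto_zero_general hβ.1
    hF.homogeneousOfDegree_one hF2 hF.dH_pos (fun _ _ hH hX => (hF.dX_pos hH hX).le) hσ
    ((eventually_lt_of_nonneg_of_lt_liminf (zero_le_one.trans hσ.le) hliminf).mono
      fun _ => le_of_lt) hAH_adapted hAX_adapted hAH_pos hAX_pos hsum hw hr hP hm hV
end
end

section
/- Let a ∈ (0,1), σ_E > 1, ρ_E = 1/σ_E ∈ (0,1), and let E(H,X) = (a H^{1−ρ_E} + (1−a) X^{1−ρ_E})^{1/(1−ρ_E)} be the CES production function. Let α ∈ (0,1) and F(H,X) = H^α E(H,X)^{1−α}. Then (X E_X(H,1))/(H E_H(H,1)) → 0 as H → ∞, and consequently the elasticity of substitution of F satisfies lim_{H→∞} σ_F(H,1) = σ_E > 1. -/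
/-!
Let `r = X E_X / (H E_H)` be the ratio of the income shares in `E`. For `F = H^α E^{1-α}`,
logarithmic differentiation and Euler's identity `H E_H + X E_X = E` give
`σ_F = (1 + α r) / (1 / σ_E + α r)`.
Hence `σ_F → σ_E` whenever `r → 0`. In the CES case `r = (b / a) (X / H) ^ p` with
`p = 1 - 1 / σ_E > 0`, so `r → 0` as `H → ∞`.
-/

open Filter Topology

noncomputable section

/-- The ratio `X E_X / (H E_H)` of the income share of land to that of labor under marginal-product
pricing. -/
def shareRatio (E : ℝ → ℝ → ℝ) (H X : ℝ) : ℝ := X * dX E H X / (H * dH E H X)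

/-- The Cobb–Douglas composite `H^α E(H,X)^{1-α}` of labor and the output of the technology `E`. -/
def cobbDouglas (α : ℝ) (E : ℝ → ℝ → ℝ) (H X : ℝ) : ℝ := H ^ α * E H X ^ (1 - α)

/-- The weighted power sum whose `1 / p`-th power is the CES aggregate. -/
def cesSum (a b p H X : ℝ) : ℝ := a * H ^ p + b * X ^ p

/-- The CES production function with weights `a`, `b`. It is parametrized by the exponent `p`, so
that its elasticity of substitution is `1 / (1 - p)`. -/
def ces (a b p H X : ℝ) : ℝ := cesSum a b p H X ^ (1 / p)

/-- The local properties of a constant-returns technology `E` at `(H, X)` from which the elasticity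
of its Cobb–Douglas composites is computed. Homogeneity of degree one enters only through Euler's
identity at that point. -/
structure EulerRegularAt (E : ℝ → ℝ → ℝ) (H X : ℝ) : Prop where
  labor_pos : 0 < H
  output_pos : 0 < E H X
  differentiableAt_labor : ∀ᶠ x in 𝓝 X, DifferentiableAt ℝ (fun h => E h x) H
  differentiableAt_land : DifferentiableAt ℝ (fun x => E H x) X
  differentiableAt_dH : DifferentiableAt ℝ (fun x => dH E H x) X
  dH_ne_zero : dH E H X ≠ 0
  dX_ne_zero : dX E H X ≠ 0
  euler : H * dH E H X + X * dX E H X = E H X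

section CobbDouglas

variable {E : ℝ → ℝ → ℝ} {α H X : ℝ}

lemma dH_cobbDouglas (hH : H ≠ 0) (hE : E H X ≠ 0)
    (hEH : DifferentiableAt ℝ (fun h => E h X) H) :
    dH (cobbDouglas α E) H X =
      cobbDouglas α E H X * (α / H + (1 - α) * dH E H X / E H X) := by
  have hderiv := (Real.hasDerivAt_rpow_const (p := α) (Or.inl hH)).mul
    (hEH.hasDerivAt.rpow_const (p := 1 - α) (Or.inl hE))
  refine hderiv.deriv.trans ?_
  rw [Real.rpow_sub_one hH, Real.rpow_sub_one hE, cobbDouglas, dH]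
  ring

lemma hasDerivAt_cobbDouglas_land (hE : E H X ≠ 0)
    (hEX : DifferentiableAt ℝ (fun x => E H x) X) :
    HasDerivAt (fun x => cobbDouglas α E H x)
      ((1 - α) * cobbDouglas α E H X * dX E H X / E H X) X := by
  refine ((hEX.hasDerivAt.rpow_const (p := 1 - α) (Or.inl hE)).const_mul (H ^ α)).congr_deriv ?_
  rw [Real.rpow_sub_one hE, cobbDouglas, dX]
  ring

lemma dHX_cobbDouglas (hH : H ≠ 0) (hE : E H X ≠ 0)
    (hEH : ∀ᶠ x in 𝓝 X, DifferentiableAt ℝ (fun h => E h x) H)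
    (hEX : DifferentiableAt ℝ (fun x => E H x) X)
    (hEHX : DifferentiableAt ℝ (fun x => dH E H x) X) :
    dHX (cobbDouglas α E) H X = (1 - α) * cobbDouglas α E H X / E H X *
      (α * dX E H X / H + dHX E H X - α * dH E H X * dX E H X / E H X) := by
  have hdH : (fun x => dH (cobbDouglas α E) H x) =ᶠ[𝓝 X]
      fun x => cobbDouglas α E H x * (α / H + (1 - α) * dH E H x / E H x) := by
    filter_upwards [hEH, hEX.continuousAt.eventually_ne hE] with x hdiff hne
    exact dH_cobbDouglas hH hne hdiff
  have hderiv := (hasDerivAt_cobbDouglas_land (α := α) hE hEX).mul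
    (((hEHX.hasDerivAt.const_mul (1 - α)).div hEX.hasDerivAt hE).const_add (α / H))
  refine (hderiv.congr_of_eventuallyEq hdH).deriv.trans ?_
  simp only [Pi.div_apply, dHX, dX]
  field_simp
  ring

lemma sigmaF_cobbDouglas (hα : α ≠ 1) (hE : EulerRegularAt E H X) :
    sigmaF (cobbDouglas α E) H X =
      (1 + α * shareRatio E H X) / (1 / sigmaF E H X + α * shareRatio E H X) := by
  obtain ⟨hH, hpos, hEH, hEX, hEHX, hdH, hdX, heuler⟩ := hE
  have hF : 0 < cobbDouglas α E H X := by unfold cobbDouglas; positivity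
  have hα' : 1 - α ≠ 0 := sub_ne_zero.2 hα.symm
  have hFH : dH (cobbDouglas α E) H X = cobbDouglas α E H X * dH E H X / E H X *
      (1 + α * shareRatio E H X) := by
    rw [dH_cobbDouglas hH.ne' hpos.ne' hEH.self_of_nhds, shareRatio]
    field_simp
    linear_combination -α * heuler
  have hFX := (hasDerivAt_cobbDouglas_land (α := α) hpos.ne' hEX).deriv
  have hFHX : dHX (cobbDouglas α E) H X =
      (1 - α) * cobbDouglas α E H X * dH E H X * dX E H X / E H X ^ 2 *
        (1 / sigmaF E H X + α * shareRatio E H X) := by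
    rw [dHX_cobbDouglas hH.ne' hpos.ne' hEH hEX hEHX, shareRatio, sigmaF, one_div_div]
    field_simp
    linear_combination -α * dX E H X * heuler
  rw [sigmaF, hFH, dX, hFX, hFHX]
  field_simp

lemma tendsto_sigmaF_cobbDouglas {l : Filter ℝ} {σ : ℝ} (hα : α ≠ 1) (hσ : σ ≠ 0)
    (hE : ∀ᶠ H in l, EulerRegularAt E H X)
    (hshare : Tendsto (fun H => shareRatio E H X) l (𝓝 0))
    (hsigma : Tendsto (fun H => sigmaF E H X) l (𝓝 σ)) :
    Tendsto (fun H => sigmaF (cobbDouglas α E) H X) l (𝓝 σ) := by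
  have hlim : Tendsto
      (fun H => (1 + α * shareRatio E H X) / (1 / sigmaF E H X + α * shareRatio E H X)) l
      (𝓝 ((1 + α * 0) / (1 / σ + α * 0))) :=
    ((hshare.const_mul α).const_add 1).div
      ((tendsto_const_nhds.div hsigma hσ).add (hshare.const_mul α)) (by simpa using hσ)
  rw [mul_zero, add_zero, add_zero, one_div_one_div] at hlim
  refine hlim.congr' ?_
  filter_upwards [hE] with H hreg
  exact (sigmaF_cobbDouglas hα hreg).symm

end CobbDouglas

section CES

variable {a b p H X : ℝ}

lemma cesSum_comm (a b p H X : ℝ) : cesSum a b p H X = cesSum b a p X H := add_comm _ _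

lemma ces_pos (hS : 0 < cesSum a b p H X) : 0 < ces a b p H X :=
  Real.rpow_pos_of_pos hS _

lemma hasDerivAt_cesSum_rpow_labor (q : ℝ) (hH : H ≠ 0) (hS : cesSum a b p H X ≠ 0) :
    HasDerivAt (fun h => cesSum a b p h X ^ q)
      (a * (p * H ^ (p - 1)) * q * cesSum a b p H X ^ (q - 1)) H :=
  (((Real.hasDerivAt_rpow_const (Or.inl hH)).const_mul a).add_const (b * X ^ p)).rpow_const
    (Or.inl hS)

lemma hasDerivAt_cesSum_rpow_land (q : ℝ) (hX : X ≠ 0) (hS : cesSum a b p H X ≠ 0) :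
    HasDerivAt (fun x => cesSum a b p H x ^ q)
      (b * (p * X ^ (p - 1)) * q * cesSum a b p H X ^ (q - 1)) X := by
  simp only [cesSum_comm a b p H] at hS ⊢
  exact hasDerivAt_cesSum_rpow_labor q hX hS

lemma hasDerivAt_ces_labor (hp : p ≠ 0) (hH : H ≠ 0) (hS : cesSum a b p H X ≠ 0) :
    HasDerivAt (fun h => ces a b p h X)
      (a * H ^ (p - 1) * cesSum a b p H X ^ (1 / p - 1)) H :=
  (hasDerivAt_cesSum_rpow_labor (1 / p) hH hS).congr_deriv (by field_simp)

lemma hasDerivAt_ces_land (hp : p ≠ 0) (hX : X ≠ 0) (hS : cesSum a b p H X ≠ 0) :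
    HasDerivAt (fun x => ces a b p H x)
      (b * X ^ (p - 1) * cesSum a b p H X ^ (1 / p - 1)) X :=
  (hasDerivAt_cesSum_rpow_land (1 / p) hX hS).congr_deriv (by field_simp)

lemma eventually_cesSum_ne_zero (hX : X ≠ 0) (hS : cesSum a b p H X ≠ 0) :
    ∀ᶠ x in 𝓝 X, cesSum a b p H x ≠ 0 :=
  (((Real.continuousAt_rpow_const X p (Or.inl hX)).const_mul b).const_add
    (a * H ^ p)).eventually_ne hS

lemma hasDerivAt_dH_ces (hp : p ≠ 0) (hH : H ≠ 0) (hX : X ≠ 0) (hS : cesSum a b p H X ≠ 0) :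
    HasDerivAt (fun x => dH (ces a b p) H x)
      ((1 - p) * a * b * H ^ (p - 1) * X ^ (p - 1) * cesSum a b p H X ^ (1 / p - 2)) X := by
  have hdH : (fun x => dH (ces a b p) H x) =ᶠ[𝓝 X]
      fun x => a * H ^ (p - 1) * cesSum a b p H x ^ (1 / p - 1) := by
    filter_upwards [eventually_cesSum_ne_zero hX hS] with x hne
    exact (hasDerivAt_ces_labor hp hH hne).deriv
  have hderiv := (hasDerivAt_cesSum_rpow_land (1 / p - 1) hX hS).const_mul (a * H ^ (p - 1))
  refine (hderiv.congr_of_eventuallyEq hdH).congr_deriv ?_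
  rw [show 1 / p - 1 - 1 = 1 / p - 2 by ring]
  field_simp

lemma shareRatio_ces (hp : p ≠ 0) (hH : H ≠ 0) (hX : X ≠ 0) (hS : 0 < cesSum a b p H X) :
    shareRatio (ces a b p) H X = b * X ^ p / (a * H ^ p) := by
  rw [shareRatio, dX, dH, (hasDerivAt_ces_land hp hX hS.ne').deriv,
    (hasDerivAt_ces_labor hp hH hS.ne').deriv, Real.rpow_sub_one hX, Real.rpow_sub_one hH]
  field_simp

lemma sigmaF_ces (ha : a ≠ 0) (hb : b ≠ 0) (hp : p ≠ 0) (hH : 0 < H) (hX : 0 < X)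
    (hS : 0 < cesSum a b p H X) : sigmaF (ces a b p) H X = 1 / (1 - p) := by
  have hpowers : cesSum a b p H X ^ (1 / p - 1) * cesSum a b p H X ^ (1 / p - 1) =
      ces a b p H X * cesSum a b p H X ^ (1 / p - 2) := by
    rw [ces, ← Real.rpow_add hS, ← Real.rpow_add hS]
    ring_nf
  have hces := ces_pos hS
  rw [sigmaF, dH, dX, dHX, (hasDerivAt_ces_labor hp hH.ne' hS.ne').deriv,
    (hasDerivAt_ces_land hp hX.ne' hS.ne').deriv,
    (hasDerivAt_dH_ces hp hH.ne' hX.ne' hS.ne').deriv, mul_mul_mul_comm, hpowers]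
  field_simp

lemma euler_ces (hp : p ≠ 0) (hH : H ≠ 0) (hX : X ≠ 0) (hS : cesSum a b p H X ≠ 0) :
    H * dH (ces a b p) H X + X * dX (ces a b p) H X = ces a b p H X := by
  rw [dH, dX, (hasDerivAt_ces_labor hp hH hS).deriv, (hasDerivAt_ces_land hp hX hS).deriv, ces,
    Real.rpow_sub_one hH, Real.rpow_sub_one hX, Real.rpow_sub_one hS]
  field_simp
  rw [cesSum]

lemma eulerRegularAt_ces (ha : a ≠ 0) (hb : b ≠ 0) (hp : p ≠ 0) (hH : 0 < H) (hX : 0 < X)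
    (hS : 0 < cesSum a b p H X) : EulerRegularAt (ces a b p) H X where
  labor_pos := hH
  output_pos := ces_pos hS
  differentiableAt_labor := (eventually_cesSum_ne_zero hX.ne' hS.ne').mono fun _ hne =>
    (hasDerivAt_ces_labor hp hH.ne' hne).differentiableAt
  differentiableAt_land := (hasDerivAt_ces_land hp hX.ne' hS.ne').differentiableAt
  differentiableAt_dH := (hasDerivAt_dH_ces hp hH.ne' hX.ne' hS.ne').differentiableAt
  dH_ne_zero := by
    rw [dH, (hasDerivAt_ces_labor hp hH.ne' hS.ne').deriv]
    positivity
  dX_ne_zero := by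
    rw [dX, (hasDerivAt_ces_land hp hX.ne' hS.ne').deriv]
    positivity
  euler := euler_ces hp hH.ne' hX.ne' hS.ne'

lemma tendsto_const_mul_rpow_atTop (ha : 0 < a) (hp : 0 < p) :
    Tendsto (fun H : ℝ => a * H ^ p) atTop atTop :=
  (tendsto_rpow_atTop hp).const_mul_atTop ha

lemma eventually_cesSum_pos (b X : ℝ) (ha : 0 < a) (hp : 0 < p) :
    ∀ᶠ H in atTop, 0 < cesSum a b p H X :=
  (tendsto_atTop_add_const_right _ _ (tendsto_const_mul_rpow_atTop ha hp)).eventually_gt_atTop 0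

lemma tendsto_shareRatio_ces (b : ℝ) (ha : 0 < a) (hp : 0 < p) (hX : X ≠ 0) :
    Tendsto (fun H => shareRatio (ces a b p) H X) atTop (𝓝 0) := by
  refine ((tendsto_const_mul_rpow_atTop ha hp).const_div_atTop (b * X ^ p)).congr' ?_
  filter_upwards [eventually_ne_atTop 0, eventually_cesSum_pos b X ha hp] with H hH hS
  exact (shareRatio_ces hp.ne' hH hX hS).symm

end CES

theorem composite_elasticity_limit_general {a b σ ρ α X : ℝ} (ha : 0 < a) (hb : b ≠ 0)
    (hσ : σ ≠ 0) (hρ : ρ = 1 / σ) (hρ_lt : ρ < 1) (hα : α ≠ 1) (hX : 0 < X) :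
    Tendsto (fun H => shareRatio (ces a b (1 - ρ)) H X) atTop (𝓝 0) ∧
      Tendsto (fun H => sigmaF (cobbDouglas α (ces a b (1 - ρ))) H X) atTop (𝓝 σ) := by
  have hp : 0 < 1 - ρ := sub_pos.2 hρ_lt
  have hpos := (eventually_gt_atTop 0).and (eventually_cesSum_pos b X ha hp)
  have hreg : ∀ᶠ H in atTop, EulerRegularAt (ces a b (1 - ρ)) H X :=
    hpos.mono fun H ⟨hH, hS⟩ => eulerRegularAt_ces ha.ne' hb hp.ne' hH hX hS
  have hshare := tendsto_shareRatio_ces b ha hp hX.ne'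
  have hsigma : Tendsto (fun H => sigmaF (ces a b (1 - ρ)) H X) atTop (𝓝 σ) := by
    refine tendsto_const_nhds.congr' (hpos.mono fun H ⟨hH, hS⟩ => ?_)
    calc σ = 1 / (1 - (1 - ρ)) := by rw [sub_sub_cancel, hρ, one_div_one_div]
      _ = sigmaF (ces a b (1 - ρ)) H X := (sigmaF_ces ha.ne' hb hp.ne' hH hX hS).symm
  exact ⟨hshare, tendsto_sigmaF_cobbDouglas hα hσ hreg hshare hsigma⟩

/-- If `E` is CES with elasticity of substitution `σ_E > 1` and
`F(H,X) = H^α E(H,X)^{1-α}`, then `(X E_X)/(H E_H) → 0` as `H → ∞` (at `X = 1`) and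
consequently `σ_F(H,1) → σ_E` as `H → ∞`. -/
theorem composite_elasticity_limit
    (a σE ρE α : ℝ) (ha : a ∈ Set.Ioo (0 : ℝ) 1) (hσE : 1 < σE) (hρE : ρE = 1 / σE)
    (hα : α ∈ Set.Ioo (0 : ℝ) 1)
    (E F : ℝ → ℝ → ℝ)
    (hE : E = fun H X => (a * H ^ (1 - ρE) + (1 - a) * X ^ (1 - ρE)) ^ (1 / (1 - ρE)))
    (hF : F = fun H X => H ^ α * E H X ^ (1 - α)) :
    Tendsto (fun H : ℝ => 1 * dX E H 1 / (H * dH E H 1)) atTop (𝓝 0) ∧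
    Tendsto (fun H : ℝ => sigmaF F H 1) atTop (𝓝 σE) := by
  subst hE hF
  have hσ : 0 < σE := one_pos.trans hσE
  exact composite_elasticity_limit_general ha.1 (sub_pos.2 ha.2).ne' hσ.ne' hρE
    (hρE ▸ (div_lt_one hσ).2 hσE) hα.2.ne one_pos
end
end
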